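/- Let X_J and Y be nonempty finite sets, μ_J: X_J → ℝ and ν: Y → ℝ strictly positive weight functions, c: X_J × Y → ℝ a cost function, ε > 0, φ₁, φ₂ entropy functions satisfying Assumption A (nonnegative, finite on [0,∞), continuously differentiable on the interior of their domain) with divergences D₁ = D_{φ₁}, D₂ = D_{φ₂}, and ν_{-J}: Y → ℝ≥0 a nonnegative function. Then the unbalanced cell subproblem min over nonnegative plans π: X_J × Y → ℝ≥0 of E_J(π|ν_{-J}) := Σ_{x,y} c(x,y)π(x,y) + ε·KL(π | μ_J ⊗ ν) + D₁(P_X π | μ_J) + D₂(P_Y π + ν_{-J} | ν) has a finite infimum, and this infimum is attained by a unique minimizer π_J. -/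

import Mathlib

open Filter Topology
open scoped Classical

noncomputable section

/-- `φ : ℝ → ℝ ∪ {+∞}` is an entropy function: lower semicontinuous, convex,
`dom(φ) ⊆ [0,∞)`, `dom(φ)\{0} ≠ ∅`, never taking the value `-∞`. -/
def IsEntropyFn (φ : ℝ → EReal) : Prop :=
  LowerSemicontinuous φ ∧
  (∀ x y a b : ℝ, 0 ≤ a → 0 ≤ b → a + b = 1 →
      φ (a * x + b * y) ≤ (a : EReal) * φ x + (b : EReal) * φ y) ∧
  (∀ x : ℝ, φ x ≠ ⊥) ∧
  (∀ x : ℝ, φ x < ⊤ → 0 ≤ x) ∧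
  (∃ x : ℝ, x ≠ 0 ∧ φ x < ⊤)

/-- The recession slope `φ'_∞ = lim_{x→∞} φ(x)/x`. -/
def recessionSlope (φ : ℝ → EReal) : EReal :=
  Filter.limsup (fun x : ℝ => φ x * ((x⁻¹ : ℝ) : EReal)) Filter.atTop

/-- The `φ`-divergence on a finite set `Z`:
`D_φ(ρ|σ) = ∑_{z : σ z > 0} σ z · φ(ρ z / σ z) + φ'_∞ · ∑_{z : σ z = 0} ρ z`. -/
def divergence {Z : Type*} [Fintype Z] (φ : ℝ → EReal) (ρ σ : Z → ℝ) : EReal :=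
  (∑ z, if 0 < σ z then (σ z : EReal) * φ (ρ z / σ z) else 0)
    + recessionSlope φ * ((∑ z, if σ z = 0 then ρ z else 0 : ℝ) : EReal)

/-- The convex conjugate `φ*(z) = sup_{x ∈ ℝ} (z·x − φ(x))`. -/
def conjFn (φ : ℝ → EReal) (z : ℝ) : EReal :=
  ⨆ x : ℝ, (((z * x : ℝ) : EReal) - φ x)

/-- Kullback–Leibler divergence on a finite set, with `0·log 0 = 0`:
`KL(ρ|σ) = ∑ z (ρ z log(ρ z/σ z) − ρ z + σ z)` if `ρ ≪ σ`, else `+∞`. -/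
def KLfin {Z : Type*} [Fintype Z] (ρ σ : Z → ℝ) : EReal :=
  if ∀ z, σ z = 0 → ρ z = 0 then
    ((∑ z, (ρ z * Real.log (ρ z / σ z) - ρ z + σ z) : ℝ) : EReal)
  else ⊤

/-- Assumption A: the entropy function `φ` is nonnegative, finite on `[0,∞)`,
and continuously differentiable on the interior `(0,∞)` of its domain. -/
def AssumptionA (φ : ℝ → EReal) : Prop :=
  IsEntropyFn φ ∧ (∀ x : ℝ, 0 ≤ φ x) ∧ (∀ x : ℝ, 0 ≤ x → φ x ≠ ⊤) ∧
  ContDiffOn ℝ 1 (fun s : ℝ => (φ s).toReal) (Set.Ioi (0 : ℝ))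

/-- Primal objective of the unbalanced (cell) problem with `Y`-submarginal `νm`:
`E_J(π|νm) = ⟨c, π⟩ + ε KL(π | μ⊗ν) + D_{φ₁}(P_X π | μ) + D_{φ₂}(P_Y π + νm | ν)`. -/
def EJfun {W Y : Type*} [Fintype W] [Fintype Y]
    (c : W → Y → ℝ) (ε : ℝ) (φ₁ φ₂ : ℝ → EReal)
    (μ : W → ℝ) (ν : Y → ℝ) (νm : Y → ℝ) (π : W → Y → ℝ) : EReal :=
  ((∑ x, ∑ y, c x y * π x y : ℝ) : EReal)
    + (ε : EReal) * KLfin (fun p : W × Y => π p.1 p.2) (fun p : W × Y => μ p.1 * ν p.2)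
    + divergence φ₁ (fun x => ∑ y, π x y) μ
    + divergence φ₂ (fun y => (∑ x, π x y) + νm y) ν

/-- Dual objective of the unbalanced (cell) problem with `Y`-submarginal `νm`. -/
def DJfun {W Y : Type*} [Fintype W] [Fintype Y]
    (c : W → Y → ℝ) (ε : ℝ) (φ₁ φ₂ : ℝ → EReal)
    (μ : W → ℝ) (ν : Y → ℝ) (νm : Y → ℝ) (α : W → ℝ) (β : Y → ℝ) : EReal :=
  ((ε * ∑ x, ∑ y, (1 - Real.exp ((α x + β y - c x y) / ε)) * (μ x * ν y) : ℝ) : EReal)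
    - (∑ x, (μ x : EReal) * conjFn φ₁ (-(α x)))
    - (∑ y, (ν y : EReal) * conjFn φ₂ (-(β y)))
    - ((∑ y, β y * νm y : ℝ) : EReal)

/-- The `Y`-submarginal `ν_{-J}` of the plan `π` outside the cell `J`:
`ν_{-J}(y) = ∑_{x ∉ J} π(x,y)`. -/
def outMarg {X Y : Type*} [Fintype X] (J : Set X) (π : X → Y → ℝ) : Y → ℝ :=
  fun y => ∑ x, (Jᶜ).indicator (fun x' => π x' y) x

/-- The global unbalanced objective
`E(π) = ⟨c, π⟩ + ε KL(π|μ⊗ν) + D_{φ₁}(P_X π|μ) + D_{φ₂}(P_Y π|ν)`. -/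
def Eglobal {X Y : Type*} [Fintype X] [Fintype Y]
    (c : X → Y → ℝ) (ε : ℝ) (φ₁ φ₂ : ℝ → EReal)
    (μ : X → ℝ) (ν : Y → ℝ) (π : X → Y → ℝ) : EReal :=
  EJfun c ε φ₁ φ₂ μ ν (fun _ => 0) π

lemma aux_toReal {φ : ℝ → EReal} (h : AssumptionA φ) {x : ℝ} (hx : 0 ≤ x) :
    φ x = (((φ x).toReal : ℝ) : EReal) :=
  (EReal.coe_toReal (h.2.2.1 x hx) (h.1.2.2.1 x)).symm

lemma aux_nonneg {φ : ℝ → EReal} (h : AssumptionA φ) (x : ℝ) : 0 ≤ (φ x).toReal :=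
  EReal.toReal_nonneg (h.2.1 x)

lemma aux_convex {φ : ℝ → EReal} (h : AssumptionA φ) :
    ConvexOn ℝ (Set.Ici 0) (fun s : ℝ => (φ s).toReal) := by
  refine ⟨convex_Ici 0, ?_⟩
  intro x hx y hy a b ha hb hab
  have hx' : 0 ≤ x := hx
  have hy' : 0 ≤ y := hy
  have hc := h.1.2.1 x y a b ha hb hab
  rw [aux_toReal h hx', aux_toReal h hy',
    aux_toReal h (by positivity : 0 ≤ a * x + b * y)] at hc
  simp only [smul_eq_mul]
  exact_mod_cast hc

lemma aux_lsc {φ : ℝ → EReal} (h : AssumptionA φ) :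
    LowerSemicontinuousOn (fun s : ℝ => (φ s).toReal) (Set.Ici 0) := by
  intro x hx y hy
  have hx' : 0 ≤ x := hx
  have hl := h.1.1 x (y : EReal) (by
    show (y : EReal) < φ x
    rw [aux_toReal h hx']; exact_mod_cast hy)
  filter_upwards [mem_nhdsWithin_of_mem_nhds hl, self_mem_nhdsWithin] with z hz hz0
  have hz0' : 0 ≤ z := hz0
  have hz' : (y : EReal) < φ z := hz
  rw [aux_toReal h hz0'] at hz'
  exact_mod_cast hz'

lemma aux_coe_sum {Z : Type*} (s : Finset Z) (f : Z → ℝ) :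
    ((∑ z ∈ s, f z : ℝ) : EReal) = ∑ z ∈ s, (f z : EReal) := by
  classical
  induction s using Finset.induction_on with
  | empty => simp
  | insert a s ha ih => rw [Finset.sum_insert ha, Finset.sum_insert ha, EReal.coe_add, ih]

lemma aux_div {Z : Type*} [Fintype Z] {φ : ℝ → EReal} (h : AssumptionA φ) (ρ σ : Z → ℝ)
    (hρ : ∀ z, 0 ≤ ρ z) (hσ : ∀ z, 0 < σ z) :
    divergence φ ρ σ = ((∑ z, σ z * (φ (ρ z / σ z)).toReal : ℝ) : EReal) := by
  unfold divergence
  have h2 : (∑ z, if σ z = 0 then ρ z else 0 : ℝ) = 0 :=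
    Finset.sum_eq_zero fun z _ => by rw [if_neg (hσ z).ne']
  rw [h2, EReal.coe_zero, mul_zero, add_zero, aux_coe_sum]
  refine Finset.sum_congr rfl fun z _ => ?_
  rw [if_pos (hσ z), EReal.coe_mul, ← aux_toReal h (div_nonneg (hρ z) (hσ z).le)]

/-- one-coordinate part of the objective -/
def auxh (c ε m t : ℝ) : ℝ := c * t + ε * (t * Real.log (t / m) - t + m)

/-- real-valued objective -/
def auxF {X Y : Type*} [Fintype X] [Fintype Y]
    (c : X → Y → ℝ) (ε : ℝ) (φ₁ φ₂ : ℝ → EReal)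
    (μ : X → ℝ) (ν : Y → ℝ) (νm : Y → ℝ) (π : X → Y → ℝ) : ℝ :=
  (∑ x, ∑ y, auxh (c x y) ε (μ x * ν y) (π x y))
    + (∑ x, μ x * (φ₁ ((∑ y, π x y) / μ x)).toReal)
    + (∑ y, ν y * (φ₂ (((∑ x, π x y) + νm y) / ν y)).toReal)

lemma aux_EJ {X Y : Type*} [Fintype X] [Fintype Y]
    (μ : X → ℝ) (ν : Y → ℝ) (hμ : ∀ x, 0 < μ x) (hν : ∀ y, 0 < ν y)
    (c : X → Y → ℝ) (ε : ℝ)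
    (φ₁ φ₂ : ℝ → EReal) (h₁ : AssumptionA φ₁) (h₂ : AssumptionA φ₂)
    (νm : Y → ℝ) (hνm : ∀ y, 0 ≤ νm y) (π : X → Y → ℝ) (hπ : ∀ x y, 0 ≤ π x y) :
    EJfun c ε φ₁ φ₂ μ ν νm π = (auxF c ε φ₁ φ₂ μ ν νm π : EReal) := by
  unfold EJfun auxF KLfin
  rw [aux_div h₁ _ _ (fun x => Finset.sum_nonneg fun y _ => hπ x y) hμ,
    aux_div h₂ _ _ (fun y => add_nonneg (Finset.sum_nonneg fun x _ => hπ x y) (hνm y)) hν,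
    if_pos (fun z hz => absurd hz (mul_pos (hμ _) (hν _)).ne')]
  rw [← EReal.coe_mul, ← EReal.coe_add, ← EReal.coe_add, ← EReal.coe_add]
  congr 3
  rw [Fintype.sum_prod_type]
  simp only [auxh, Finset.mul_sum, ← Finset.sum_add_distrib]

lemma auxh_eq (c ε m t : ℝ) (hm : 0 < m) :
    auxh c ε m t = ε * (t * Real.log t) + ((c - ε * Real.log m - ε) * t + ε * m) := by
  unfold auxh
  rcases eq_or_ne t 0 with rfl | ht
  · simp
  · rw [Real.log_div ht hm.ne']; ring

lemma auxh_cont (c ε m : ℝ) (hm : 0 < m) : Continuous (auxh c ε m) := by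
  have : auxh c ε m = fun t => ε * (t * Real.log t) + ((c - ε * Real.log m - ε) * t + ε * m) :=
    funext fun t => auxh_eq c ε m t hm
  rw [this]
  have := Real.continuous_mul_log
  fun_prop

lemma auxh_lower (c ε m : ℝ) (hm : 0 < m) (hε : 0 < ε) :
    ∃ K : ℝ, 0 ≤ K ∧ ∀ t, 0 ≤ t → t - K ≤ auxh c ε m t := by
  set s := (1 - c) / ε with hs
  refine ⟨ε * m * Real.exp s, by positivity, fun t ht => ?_⟩
  have hcs : ε * s = 1 - c := by rw [hs]; field_simp
  rcases ht.eq_or_lt with rfl | ht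
  · have : 0 ≤ ε * m * Real.exp s := by positivity
    have h2 : 0 < ε * m := by positivity
    simp [auxh]; nlinarith
  · have hb : 0 < m * Real.exp s := by positivity
    have h1 := Real.log_le_sub_one_of_pos (div_pos hb ht)
    rw [Real.log_div hb.ne' ht.ne', Real.log_mul hm.ne' (Real.exp_pos s).ne', Real.log_exp] at h1
    have h2 : t * (Real.log m + s - Real.log t) ≤ m * Real.exp s - t := by
      have := mul_le_mul_of_nonneg_left h1 ht.le
      have h3 : t * (m * Real.exp s / t - 1) = m * Real.exp s - t := by field_simp
      linarith
    have h4 := mul_le_mul_of_nonneg_left h2 hε.le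
    have h5 : 0 < ε * m := by positivity
    rw [auxh_eq c ε m t hm]
    have h6 : ε * (t * (Real.log m + s - Real.log t))
      = ε * t * Real.log m + (ε * s) * t - ε * (t * Real.log t) := by ring
    rw [h6, hcs] at h4
    nlinarith

lemma auxh_strict (c ε m : ℝ) (hm : 0 < m) (hε : 0 < ε) {s t : ℝ} (hs : 0 ≤ s) (ht : 0 ≤ t)
    (hst : s ≠ t) :
    auxh c ε m (1 / 2 * s + 1 / 2 * t) < 1 / 2 * auxh c ε m s + 1 / 2 * auxh c ε m t := by
  have := Real.strictConvexOn_mul_log.2 hs ht hst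
    (by norm_num : (0 : ℝ) < 1 / 2) (by norm_num : (0 : ℝ) < 1 / 2) (by norm_num)
  simp only [smul_eq_mul] at this
  rw [auxh_eq _ _ _ _ hm, auxh_eq _ _ _ _ hm, auxh_eq _ _ _ _ hm]
  have := mul_lt_mul_of_pos_left this hε
  nlinarith

lemma auxh_conv (c ε m : ℝ) (hm : 0 < m) (hε : 0 < ε) {s t : ℝ} (hs : 0 ≤ s) (ht : 0 ≤ t) :
    auxh c ε m (1 / 2 * s + 1 / 2 * t) ≤ 1 / 2 * auxh c ε m s + 1 / 2 * auxh c ε m t := by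
  rcases eq_or_ne s t with rfl | h
  · have : 1 / 2 * s + 1 / 2 * s = s := by ring
    rw [this]; linarith
  · exact (auxh_strict c ε m hm hε hs ht h).le

lemma auxphi_conv {φ : ℝ → EReal} (h : AssumptionA φ) {m u a b : ℝ} (hm : 0 < m)
    (ha : 0 ≤ a) (hb : 0 ≤ b) (hu : u = 1 / 2 * a + 1 / 2 * b) :
    m * (φ (u / m)).toReal
      ≤ 1 / 2 * (m * (φ (a / m)).toReal) + 1 / 2 * (m * (φ (b / m)).toReal) := by
  have := (aux_convex h).2 (Set.mem_Ici.2 (div_nonneg ha hm.le))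
    (Set.mem_Ici.2 (div_nonneg hb hm.le))
    (by norm_num : (0 : ℝ) ≤ 1 / 2) (by norm_num : (0 : ℝ) ≤ 1 / 2) (by norm_num)
  simp only [smul_eq_mul] at this
  have e : 1 / 2 * (a / m) + 1 / 2 * (b / m) = u / m := by rw [hu]; ring
  rw [e] at this
  have := mul_le_mul_of_nonneg_left this hm.le
  linarith

lemma aux_lsc_term {Z : Type*} [TopologicalSpace Z] {φ : ℝ → EReal} (h : AssumptionA φ)
    {m : ℝ} (hm : 0 < m) {S : Set Z} (g : Z → ℝ) (hg : Continuous g) (hS : ∀ z ∈ S, 0 ≤ g z) :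
    LowerSemicontinuousOn (fun z => m * (φ (g z / m)).toReal) S := by
  have h1 : LowerSemicontinuousOn (fun s : ℝ => m * (φ s).toReal) (Set.Ici 0) :=
    (continuous_const_mul m).comp_lowerSemicontinuousOn (aux_lsc h)
      (monotone_mul_left_of_nonneg hm.le)
  intro z hz y hy
  have hc : Continuous fun z => g z / m := by fun_prop
  have ht : Tendsto (fun z => g z / m) (𝓝[S] z) (𝓝[Set.Ici 0] (g z / m)) :=
    hc.continuousWithinAt.tendsto_nhdsWithin fun w hw => div_nonneg (hS w hw) hm.le
  exact ht.eventually (h1 (g z / m) (div_nonneg (hS z hz) hm.le) y hy)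

/-- the unbalanced cell subproblem has a finite infimum, attained
by a unique minimizer. -/
theorem cell_subproblem_exists_unique_minimizer
    {X Y : Type*} [Fintype X] [Fintype Y] [Nonempty X] [Nonempty Y]
    (μ : X → ℝ) (ν : Y → ℝ) (hμ : ∀ x, 0 < μ x) (hν : ∀ y, 0 < ν y)
    (c : X → Y → ℝ) (ε : ℝ) (hε : 0 < ε)
    (φ₁ φ₂ : ℝ → EReal) (h₁ : AssumptionA φ₁) (h₂ : AssumptionA φ₂)
    (νm : Y → ℝ) (hνm : ∀ y, 0 ≤ νm y) :
    ∃! πJ : X → Y → ℝ,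
      (∀ x y, 0 ≤ πJ x y) ∧
      (∀ π : X → Y → ℝ, (∀ x y, 0 ≤ π x y) →
        EJfun c ε φ₁ φ₂ μ ν νm πJ ≤ EJfun c ε φ₁ φ₂ μ ν νm π) ∧
      EJfun c ε φ₁ φ₂ μ ν νm πJ ≠ ⊤ ∧ EJfun c ε φ₁ φ₂ μ ν νm πJ ≠ ⊥ := by
  have hm : ∀ x y, 0 < μ x * ν y := fun x y => mul_pos (hμ x) (hν y)
  have hEJ := aux_EJ μ ν hμ hν c ε φ₁ φ₂ h₁ h₂ νm hνm
  set F := auxF c ε φ₁ φ₂ μ ν νm with hF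
  -- lower bound
  choose K hK0 hK using fun x y => auxh_lower (c x y) ε (μ x * ν y) (hm x y) hε
  have hlow : ∀ π : X → Y → ℝ, (∀ x y, 0 ≤ π x y) → ∀ x y, π x y - (∑ x, ∑ y, K x y) ≤ F π := by
    intro π hπ x y
    have a1 : ∑ x, ∑ y, (π x y - K x y) ≤ ∑ x, ∑ y, auxh (c x y) ε (μ x * ν y) (π x y) :=
      Finset.sum_le_sum fun x _ => Finset.sum_le_sum fun y _ => hK x y _ (hπ x y)
    have a2 : π x y ≤ ∑ x, ∑ y, π x y :=
      (Finset.single_le_sum (f := fun y => π x y) (fun y _ => hπ x y) (Finset.mem_univ y)).trans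
        (Finset.single_le_sum (f := fun x => ∑ y, π x y)
          (fun x _ => Finset.sum_nonneg fun y _ => hπ x y) (Finset.mem_univ x))
    have a3 : 0 ≤ ∑ x, μ x * (φ₁ ((∑ y, π x y) / μ x)).toReal :=
      Finset.sum_nonneg fun x _ => mul_nonneg (hμ x).le (aux_nonneg h₁ _)
    have a4 : 0 ≤ ∑ y, ν y * (φ₂ (((∑ x, π x y) + νm y) / ν y)).toReal :=
      Finset.sum_nonneg fun y _ => mul_nonneg (hν y).le (aux_nonneg h₂ _)
    simp only [Finset.sum_sub_distrib] at a1
    rw [hF]; unfold auxF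
    linarith
  -- lower semicontinuity
  have hlsc : LowerSemicontinuousOn F {π : X → Y → ℝ | ∀ x y, 0 ≤ π x y} := by
    have b1 : Continuous fun π : X → Y → ℝ =>
        ∑ x, ∑ y, auxh (c x y) ε (μ x * ν y) (π x y) := by
      refine continuous_finsetSum _ fun x _ => continuous_finsetSum _ fun y _ => ?_
      exact (auxh_cont (c x y) ε (μ x * ν y) (hm x y)).comp (by fun_prop)
    refine LowerSemicontinuousOn.add (LowerSemicontinuousOn.add
      (b1.lowerSemicontinuous.lowerSemicontinuousOn _)
      (lowerSemicontinuousOn_sum fun x _ => ?_)) (lowerSemicontinuousOn_sum fun y _ => ?_)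
    · exact aux_lsc_term h₁ (hμ x) (fun π : X → Y → ℝ => ∑ y, π x y) (by fun_prop)
        fun π hπ => Finset.sum_nonneg fun y _ => hπ x y
    · exact aux_lsc_term h₂ (hν y) (fun π : X → Y → ℝ => (∑ x, π x y) + νm y) (by fun_prop)
        fun π hπ => add_nonneg (Finset.sum_nonneg fun x _ => hπ x y) (hνm y)
  -- existence
  set R : ℝ := max 0 (F 0 + ∑ x, ∑ y, K x y) with hR
  have hR0 : 0 ≤ R := le_max_left _ _
  have hcomp : IsCompact (Set.Icc (0 : X → Y → ℝ) (fun _ _ => R)) := by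
    have e : Set.Icc (0 : X → Y → ℝ) (fun _ _ => R)
        = Set.univ.pi fun _ : X => Set.univ.pi fun _ : Y => Set.Icc (0 : ℝ) R := by
      ext π
      simp only [Set.mem_Icc, Set.mem_pi, Set.mem_univ, true_imp_iff, Pi.le_def, Pi.zero_apply]
      exact ⟨fun h x y => ⟨h.1 x y, h.2 x y⟩, fun h => ⟨fun x y => (h x y).1, fun x y => (h x y).2⟩⟩
    rw [e]
    exact isCompact_univ_pi fun _ => isCompact_univ_pi fun _ => isCompact_Icc
  have hz : (0 : X → Y → ℝ) ∈ Set.Icc (0 : X → Y → ℝ) (fun _ _ => R) :=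
    ⟨le_rfl, fun _ _ => hR0⟩
  obtain ⟨p, hp, hpmin⟩ := (hlsc.mono fun π (hπ : π ∈ Set.Icc (0 : X → Y → ℝ) (fun _ _ => R)) =>
    (fun x y => hπ.1 x y)).exists_isMinOn ⟨0, hz⟩ hcomp
  have hp0 : ∀ x y, 0 ≤ p x y := fun x y => hp.1 x y
  have hmin : ∀ π : X → Y → ℝ, (∀ x y, 0 ≤ π x y) → F p ≤ F π := by
    intro π hπ
    by_cases hπR : ∀ x y, π x y ≤ R
    · exact hpmin (show π ∈ Set.Icc (0 : X → Y → ℝ) (fun _ _ => R) from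
        ⟨fun x y => hπ x y, fun x y => hπR x y⟩)
    · push Not at hπR
      obtain ⟨x, y, hxy⟩ := hπR
      have d1 := hlow π hπ x y
      have d2 : F p ≤ F 0 := hpmin hz
      have d3 : F 0 + ∑ x, ∑ y, K x y ≤ R := le_max_right _ _
      linarith
  refine ⟨p, ⟨hp0, fun π hπ => ?_, ?_, ?_⟩, ?_⟩
  · rw [hEJ p hp0, hEJ π hπ]
    exact EReal.coe_le_coe_iff.2 (hmin π hπ)
  · rw [hEJ p hp0]; exact EReal.coe_ne_top _
  · rw [hEJ p hp0]; exact EReal.coe_ne_bot _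
  -- uniqueness
  rintro q ⟨hq0, hqmin, -, -⟩
  have hqp : F q ≤ F p := by
    have := hqmin p hp0
    rw [hEJ p hp0, hEJ q hq0] at this
    exact EReal.coe_le_coe_iff.1 this
  by_contra hne
  obtain ⟨x₀, hx₀⟩ := Function.ne_iff.1 hne
  obtain ⟨y₀, hy₀⟩ := Function.ne_iff.1 hx₀
  let r : X → Y → ℝ := fun x y => 1 / 2 * q x y + 1 / 2 * p x y
  have hr0 : ∀ x y, 0 ≤ r x y := fun x y => by
    have := hq0 x y
    have := hp0 x y
    simp only [r]; positivity
  have hrmin := hmin r hr0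
  have e1 : ∑ x, ∑ y, auxh (c x y) ε (μ x * ν y) (r x y)
      < ∑ x, ∑ y, (1 / 2 * auxh (c x y) ε (μ x * ν y) (q x y)
        + 1 / 2 * auxh (c x y) ε (μ x * ν y) (p x y)) := by
    refine Finset.sum_lt_sum (fun x _ => Finset.sum_le_sum fun y _ =>
      auxh_conv _ _ _ (hm x y) hε (hq0 x y) (hp0 x y)) ⟨x₀, Finset.mem_univ _, ?_⟩
    exact Finset.sum_lt_sum (fun y _ => auxh_conv _ _ _ (hm x₀ y) hε (hq0 x₀ y) (hp0 x₀ y))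
      ⟨y₀, Finset.mem_univ _, auxh_strict _ _ _ (hm x₀ y₀) hε (hq0 x₀ y₀) (hp0 x₀ y₀) hy₀⟩
  have e2 : ∑ x, μ x * (φ₁ ((∑ y, r x y) / μ x)).toReal
      ≤ ∑ x, (1 / 2 * (μ x * (φ₁ ((∑ y, q x y) / μ x)).toReal)
        + 1 / 2 * (μ x * (φ₁ ((∑ y, p x y) / μ x)).toReal)) :=
    Finset.sum_le_sum fun x _ => auxphi_conv h₁ (hμ x)
      (Finset.sum_nonneg fun y _ => hq0 x y) (Finset.sum_nonneg fun y _ => hp0 x y)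
      (by simp only [r, Finset.sum_add_distrib, Finset.mul_sum])
  have e3 : ∑ y, ν y * (φ₂ (((∑ x, r x y) + νm y) / ν y)).toReal
      ≤ ∑ y, (1 / 2 * (ν y * (φ₂ (((∑ x, q x y) + νm y) / ν y)).toReal)
        + 1 / 2 * (ν y * (φ₂ (((∑ x, p x y) + νm y) / ν y)).toReal)) :=
    Finset.sum_le_sum fun y _ => auxphi_conv h₂ (hν y)
      (add_nonneg (Finset.sum_nonneg fun x _ => hq0 x y) (hνm y))
      (add_nonneg (Finset.sum_nonneg fun x _ => hp0 x y) (hνm y))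
      (by simp only [r, Finset.sum_add_distrib, ← Finset.mul_sum]; ring)
  simp only [Finset.sum_add_distrib, ← Finset.mul_sum] at e1 e2 e3
  rw [hF] at hrmin hqp
  unfold auxF at hrmin hqp
  linarith

end
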